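/- Let C be an abelian category and (A, B) a complete hereditary cotorsion pair in C. Then: (a) Ext¹_{Ch(C)}(X, Y) = 0 for every X ∈ Ã and Y ∈ B̃, i.e., every short exact sequence of cochain complexes 0 → Y → E → X → 0 with X ∈ Ã and Y ∈ B̃ splits; and (b) every acyclic cochain complex W over C admits short exact sequences of complexes 0 → W → B_W → A_W → 0 and 0 → B^W → A^W → W → 0 with A_W, A^W ∈ Ã and B_W, B^W ∈ B̃. -/

import Mathlib

open CategoryTheory CategoryTheory.Limits

universe w v u

variable {𝒜 : Type u} [Category.{v} 𝒜] [Abelian 𝒜]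

/-- `Ext¹(A, B) = 0`, phrased as: every short exact sequence `0 → B → E → A → 0`
splits. -/
def Ext1Zero {C : Type*} [Category C] [Abelian C] (A B : C) : Prop :=
  ∀ (E : C) (i : B ⟶ E) (p : E ⟶ A) (w : i ≫ p = 0),
    (ShortComplex.mk i p w).ShortExact → ∃ s : A ⟶ E, s ≫ p = 𝟙 A

/-- The right `Ext¹`-orthogonal class `S^⊥` of a class of objects `S`. -/
def rightPerp {C : Type*} [Category C] [Abelian C] (S : Set C) : Set C :=
  {B | ∀ A ∈ S, Ext1Zero A B}

/-- The left `Ext¹`-orthogonal class `⊥S` of a class of objects `S`. -/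
def leftPerp {C : Type*} [Category C] [Abelian C] (S : Set C) : Set C :=
  {A | ∀ B ∈ S, Ext1Zero A B}

/-- `(𝓐, 𝓑)` is a cotorsion pair: `𝓐 = ⊥𝓑` and `𝓑 = 𝓐^⊥`. -/
structure IsCotorsionPair {C : Type*} [Category C] [Abelian C] (𝓐 𝓑 : Set C) : Prop where
  left_eq : 𝓐 = leftPerp 𝓑
  right_eq : 𝓑 = rightPerp 𝓐

/-- `(𝓐, 𝓑)` is a complete cotorsion pair: a cotorsion pair admitting approximation
sequences `0 → X → B_X → A_X → 0` and `0 → B^X → A^X → X → 0` for every object `X`. -/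
structure IsCompleteCotorsionPair {C : Type*} [Category C] [Abelian C] (𝓐 𝓑 : Set C)
    extends IsCotorsionPair 𝓐 𝓑 : Prop where
  approx₁ : ∀ X : C, ∃ (B A : C) (i : X ⟶ B) (p : B ⟶ A) (w : i ≫ p = 0),
    (ShortComplex.mk i p w).ShortExact ∧ B ∈ 𝓑 ∧ A ∈ 𝓐
  approx₂ : ∀ X : C, ∃ (B A : C) (i : B ⟶ A) (p : A ⟶ X) (w : i ≫ p = 0),
    (ShortComplex.mk i p w).ShortExact ∧ B ∈ 𝓑 ∧ A ∈ 𝓐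

/-- `(𝓐, 𝓑)` is a hereditary pair: `Extⁿ(A, B) = 0` for all `A ∈ 𝓐`, `B ∈ 𝓑`, `n ≥ 1`. -/
def IsHereditary {C : Type u} [Category.{v} C] [Abelian C] [HasExt.{w} C]
    (𝓐 𝓑 : Set C) : Prop :=
  ∀ A ∈ 𝓐, ∀ B ∈ 𝓑, ∀ n : ℕ, 1 ≤ n → Subsingleton (Abelian.Ext A B n)

/-- The class `Ã` of acyclic cochain complexes all of whose components and cycle
objects `Zⁿ(X) = ker(Xⁿ → X^{n+1})` lie in `𝓐`. -/
def Tilde (𝓐 : Set 𝒜) : Set (CochainComplex 𝒜 ℤ) :=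
  {X | (∀ n : ℤ, X.ExactAt n) ∧ (∀ n : ℤ, X.X n ∈ 𝓐) ∧ (∀ n : ℤ, X.cycles n ∈ 𝓐)}

/-!
An acyclic complex is the splice of the short exact sequences
`0 ⟶ Zⁿ ⟶ Kⁿ ⟶ Zⁿ⁺¹ ⟶ 0` of its cycles, so both claims reduce to these sequences.

For (a), a sequence `0 ⟶ Y ⟶ E ⟶ X ⟶ 0` of acyclic complexes splits on cycles. Sections on the
cycles of degrees `n` and `n + 1` extend to a section of `Eⁿ ⟶ Xⁿ`: the obstruction is a class in
`Ext¹(Zⁿ⁺¹X, ZⁿE)` which vanishes in `Ext¹(Zⁿ⁺¹X, ZⁿX)`, hence comes from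
`Ext¹(Zⁿ⁺¹X, ZⁿY) = 0`.

For (b), approximate each cycle object, `0 ⟶ ZⁿW ⟶ Bⁿ ⟶ Aⁿ ⟶ 0`. The class of
`0 ⟶ ZⁿW ⟶ Wⁿ ⟶ Zⁿ⁺¹W ⟶ 0` pushed out to `Ext¹(Zⁿ⁺¹W, Bⁿ)` lifts to `Ext¹(Bⁿ⁺¹, Bⁿ)` because
`Ext²(Aⁿ⁺¹, Bⁿ) = 0`; the extensions of `Bⁿ⁺¹` by `Bⁿ` obtained this way are spliced into a complex
containing `W`. The other approximation is dual.

As `𝒜` need not have enough projectives or injectives, realising a degree one class by an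
extension rests on effaceability: every class of positive degree is killed by some epimorphism.
-/

section Effaceability

open Abelian

lemma epi_f_of_quasiIsoAt {ι : Type*} {c : ComplexShape ι} {K L : HomologicalComplex 𝒜 c}
    (s : K ⟶ L) (i : ι) [QuasiIsoAt s i] (hto : ∀ j, L.d j i = 0) (hfrom : ∀ j, L.d i j = 0) :
    Epi (s.f i) := by
  have : IsIso (L.iCycles i) := L.isIso_iCycles i _ rfl (hfrom _)
  have : IsIso (L.homologyπ i) := L.isIso_homologyπ _ i rfl (hto _)
  have : Epi (HomologicalComplex.cyclesMap s i ≫ L.homologyπ i) := by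
    rw [← HomologicalComplex.homologyπ_naturality]
    infer_instance
  have : Epi (HomologicalComplex.cyclesMap s i) := by
    simpa using epi_comp (HomologicalComplex.cyclesMap s i ≫ L.homologyπ i) (inv (L.homologyπ i))
  have : Epi (K.iCycles i ≫ s.f i) := by
    rw [← HomologicalComplex.cyclesMap_i]
    exact epi_comp _ _
  exact epi_of_epi (K.iCycles i) (s.f i)

open DerivedCategory in
lemma exists_epi_Q_map_single_comp_eq_zero [HasDerivedCategory.{w} 𝒜] {X : 𝒜}
    {L : CochainComplex 𝒜 ℤ} (f : Q.obj ((HomologicalComplex.single 𝒜 (.up ℤ) 0).obj X) ⟶ Q.obj L)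
    (hL : IsZero (L.X 0)) :
    ∃ (P : 𝒜) (g : P ⟶ X), Epi g ∧
      Q.map ((HomologicalComplex.single 𝒜 (.up ℤ) 0).map g) ≫ f = 0 := by
  -- In the roof `X ⟵ K ⟶ L` representing `f`, the complex `K` lives in degrees `≤ 0`, so its
  -- component `K.X 0` covers `X` and maps to `K`; the composite to `L` vanishes as `L.X 0 = 0`.
  obtain ⟨K, hK, s, hs, g, rfl⟩ := right_fac_of_isStrictlyLE f 0
  have := (isIso_Q_map_iff_quasiIso _ s).1 hs
  have : Epi (s.f 0) := epi_f_of_quasiIsoAt s 0 (by simp) (by simp)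
  let ι : (HomologicalComplex.single 𝒜 (.up ℤ) 0).obj (K.X 0) ⟶ K :=
    HomologicalComplex.mkHomFromSingle (𝟙 (K.X 0)) fun k hk =>
      (K.isZero_of_isStrictlyLE 0 k (by simp at hk; lia)).eq_of_tgt _ _
  have hιs : (HomologicalComplex.single 𝒜 (.up ℤ) 0).map
      (s.f 0 ≫ (HomologicalComplex.singleObjXSelf (.up ℤ) 0 X).hom) = ι ≫ s := by
    apply HomologicalComplex.from_single_hom_ext
    rw [HomologicalComplex.single_map_f_self, HomologicalComplex.comp_f,
      HomologicalComplex.mkHomFromSingle_f]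
    simp
  have hιg : ι ≫ g = 0 := HomologicalComplex.from_single_hom_ext (hL.eq_of_tgt _ _)
  refine ⟨K.X 0, _, epi_comp (s.f 0) (HomologicalComplex.singleObjXSelf (.up ℤ) 0 X).hom, ?_⟩
  rw [hιs, Q.map_comp, Category.assoc, IsIso.hom_inv_id_assoc, ← Q.map_comp, hιg, Q.map_zero]

open DerivedCategory in
lemma exists_epi_mk₀_comp_eq_zero [HasExt.{w} 𝒜] {X Y : 𝒜} {n : ℕ} (x : Ext X Y (n + 1)) :
    ∃ (P : 𝒜) (g : P ⟶ X), Epi g ∧ (Ext.mk₀ g).comp x (zero_add _) = 0 := by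
  let := HasDerivedCategory.standard 𝒜
  let single := HomologicalComplex.single 𝒜 (.up ℤ) 0
  let m : ℤ := (n + 1 : ℕ)
  have hY : IsZero (((single.obj Y)⟦m⟧).X 0) := by
    rw [CochainComplex.shiftFunctor_obj_X']
    exact HomologicalComplex.isZero_single_obj_X _ _ _ _ (by dsimp [m]; lia)
  let e : Q.obj ((single.obj Y)⟦m⟧) ≅ (Q.obj (single.obj Y))⟦m⟧ :=
    (Q.commShiftIso m).app (single.obj Y)
  let f : Q.obj (single.obj X) ⟶ (Q.obj (single.obj Y))⟦m⟧ := x.hom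
  obtain ⟨P, g, hg, h⟩ := exists_epi_Q_map_single_comp_eq_zero (f ≫ e.inv) hY
  have hgf : Q.map (single.map g) ≫ f = 0 := by
    rwa [← cancel_mono e.inv, Category.assoc, zero_comp]
  refine ⟨P, g, hg, ?_⟩
  ext
  rw [Ext.comp_hom, Ext.mk₀_hom, ShiftedHom.mk₀_comp, Ext.zero_hom]
  exact hgf

end Effaceability

section ExtensionsInDegreeOne

open Abelian

lemma shortExact_pushout {S : ShortComplex 𝒜} (hS : S.ShortExact) {Y : 𝒜} (φ : S.X₁ ⟶ Y) :
    (ShortComplex.mk (pushout.inr S.f φ) (pushout.desc S.g 0 (by simp) : pushout S.f φ ⟶ S.X₃)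
      (pushout.inr_desc _ _ _)).ShortExact := by
  have := hS.mono_f
  have := hS.epi_g
  have hepi : Epi (pushout.desc S.g 0 (by simp) : pushout S.f φ ⟶ S.X₃) :=
    epi_of_epi_fac (pushout.inl_desc _ _ _)
  refine .mk' (ShortComplex.exact_of_g_is_cokernel _ <|
    CokernelCofork.IsColimit.ofπ' _ _ fun {W} k hk => ?_) (by dsimp; infer_instance) hepi
  have hk' : S.f ≫ pushout.inl S.f φ ≫ k = 0 := by
    rw [pushout.condition_assoc, hk, comp_zero]
  refine ⟨hS.exact.desc _ hk', pushout.hom_ext ?_ ?_⟩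
  · exact (pushout.inl_desc_assoc _ _ _ _).trans (hS.exact.g_desc _ hk')
  · exact (pushout.inr_desc_assoc _ _ _ _).trans (zero_comp.trans hk.symm)

variable [HasExt.{w} 𝒜]

lemma exists_comp_g_eq_of_comp_extClass_eq_zero {S : ShortComplex 𝒜} (hS : S.ShortExact) {X : 𝒜}
    (h : X ⟶ S.X₃) (hh : (Ext.mk₀ h).comp hS.extClass (zero_add 1) = 0) :
    ∃ l : X ⟶ S.X₂, l ≫ S.g = h := by
  obtain ⟨x, hx⟩ := Ext.covariant_sequence_exact₃ X hS (Ext.mk₀ h) rfl hh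
  obtain ⟨l, rfl⟩ := Ext.addEquiv₀.symm.surjective x
  exact ⟨l, Ext.addEquiv₀.symm.injective (by simpa using hx)⟩

lemma exists_f_comp_eq_of_extClass_comp_eq_zero {S : ShortComplex 𝒜} (hS : S.ShortExact) {Y : 𝒜}
    (h : S.X₁ ⟶ Y) (hh : hS.extClass.comp (Ext.mk₀ h) (add_zero 1) = 0) :
    ∃ l : S.X₂ ⟶ Y, S.f ≫ l = h := by
  obtain ⟨x, hx⟩ := Ext.contravariant_sequence_exact₁ hS Y (Ext.mk₀ h) rfl hh
  obtain ⟨l, rfl⟩ := Ext.addEquiv₀.symm.surjective x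
  exact ⟨l, Ext.addEquiv₀.symm.injective (by simpa using hx)⟩

lemma exists_shortExact_extClass_eq {X Y : 𝒜} (x : Ext X Y 1) :
    ∃ (E : 𝒜) (i : Y ⟶ E) (p : E ⟶ X) (w : i ≫ p = 0)
      (hS : (ShortComplex.mk i p w).ShortExact), hS.extClass = x := by
  obtain ⟨P, g, _, hg⟩ := exists_epi_mk₀_comp_eq_zero x
  have hK : (ShortComplex.mk (kernel.ι g) g (kernel.condition g)).ShortExact :=
    .mk' (ShortComplex.exact_kernel g) inferInstance inferInstance
  obtain ⟨y, hy⟩ := Ext.contravariant_sequence_exact₃ hK Y x hg (add_zero 1)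
  obtain ⟨φ, rfl⟩ := Ext.addEquiv₀.symm.surjective y
  refine ⟨_, _, _, _, shortExact_pushout hK φ, ?_⟩
  have := ShortComplex.ShortExact.extClass_naturality hK (shortExact_pushout hK φ)
    { τ₁ := φ, τ₂ := pushout.inl _ _, τ₃ := 𝟙 X,
      comm₁₂ := pushout.condition.symm,
      comm₂₃ := (pushout.inl_desc _ _ _).trans (Category.comp_id g).symm }
  rw [← hy]
  simpa using this.symm

lemma ext1Zero_iff_subsingleton_ext {A B : 𝒜} : Ext1Zero A B ↔ Subsingleton (Ext A B 1) := by
  refine ⟨fun h => subsingleton_of_forall_eq 0 fun x => ?_, fun h E i p w hS =>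
    exists_comp_g_eq_of_comp_extClass_eq_zero hS (𝟙 A) (Subsingleton.elim _ _)⟩
  obtain ⟨E, i, p, w, hS, rfl⟩ := exists_shortExact_extClass_eq x
  obtain ⟨s, hs⟩ := h E i p w hS
  calc hS.extClass = (Ext.mk₀ (s ≫ p)).comp hS.extClass (zero_add 1) := by
        rw [hs, Ext.mk₀_id_comp]
    _ = 0 := by
        rw [← Ext.mk₀_comp_mk₀_assoc, hS.comp_extClass, Ext.comp_zero]

lemma exists_middle_hom_of_extClass_comp_eq {S T : ShortComplex 𝒜} (hS : S.ShortExact)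
    (hT : T.ShortExact) (α : S.X₁ ⟶ T.X₁) (γ : S.X₃ ⟶ T.X₃)
    (h : hS.extClass.comp (Ext.mk₀ α) (add_zero 1) =
      (Ext.mk₀ γ).comp hT.extClass (zero_add 1)) :
    ∃ β : S.X₂ ⟶ T.X₂, S.f ≫ β = α ≫ T.f ∧ β ≫ T.g = S.g ≫ γ := by
  have := hS.epi_g
  obtain ⟨β, hβ⟩ := exists_f_comp_eq_of_extClass_comp_eq_zero hS (α ≫ T.f) (by
    rw [← Ext.mk₀_comp_mk₀, ← Ext.comp_assoc_of_third_deg_zero, h,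
      Ext.comp_assoc_of_third_deg_zero, hT.extClass_comp, Ext.comp_zero])
  let δ := hS.exact.desc (β ≫ T.g) (by rw [reassoc_of% hβ, T.zero, comp_zero])
  have hδ : S.g ≫ δ = β ≫ T.g := hS.exact.g_desc _ _
  have hclass : hS.extClass.comp (Ext.mk₀ α) (add_zero 1) =
      (Ext.mk₀ δ).comp hT.extClass (zero_add 1) :=
    ShortComplex.ShortExact.extClass_naturality hS hT
      { τ₁ := α, τ₂ := β, τ₃ := δ, comm₁₂ := hβ.symm, comm₂₃ := hδ.symm }
  obtain ⟨ε, hε⟩ := exists_comp_g_eq_of_comp_extClass_eq_zero hT (γ - δ) (by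
    rw [sub_eq_add_neg, Ext.mk₀_add, Ext.mk₀_neg, Ext.add_comp, Ext.neg_comp, ← h, ← hclass,
      add_neg_cancel])
  refine ⟨β + S.g ≫ ε, by simp [hβ], ?_⟩
  rw [Preadditive.add_comp, Category.assoc, hε, ← hδ, ← Preadditive.comp_add, add_sub_cancel]

end ExtensionsInDegreeOne

section OrthogonalClasses

open Abelian

lemma Ext1Zero.of_iso {A A' B B' : 𝒜} (h : Ext1Zero A B) (eA : A ≅ A') (eB : B ≅ B') :
    Ext1Zero A' B' := by
  intro E i p w hS
  obtain ⟨s, hs⟩ := h E (eB.hom ≫ i) (p ≫ eA.inv) (by simp [reassoc_of% w])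
    (ShortComplex.shortExact_of_iso
      (ShortComplex.isoMk eB.symm (Iso.refl E) eA.symm (by simp) (by simp)) hS)
  exact ⟨eA.inv ≫ s, by simp [← cancel_mono eA.inv, hs]⟩

variable {S : Set 𝒜}

lemma mem_leftPerp_of_iso {A A' : 𝒜} (e : A ≅ A') (hA : A ∈ leftPerp S) : A' ∈ leftPerp S :=
  fun B hB => (hA B hB).of_iso e (Iso.refl B)

lemma mem_rightPerp_of_iso {B B' : 𝒜} (e : B ≅ B') (hB : B ∈ rightPerp S) : B' ∈ rightPerp S :=
  fun A hA => (hB A hA).of_iso (Iso.refl A) e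

lemma mem_leftPerp_of_shortExact {T : ShortComplex 𝒜} (hT : T.ShortExact)
    (h₁ : T.X₁ ∈ leftPerp S) (h₃ : T.X₃ ∈ leftPerp S) : T.X₂ ∈ leftPerp S := by
  let := HasExt.standard 𝒜
  intro B hB
  have := ext1Zero_iff_subsingleton_ext.1 (h₁ B hB)
  have := ext1Zero_iff_subsingleton_ext.1 (h₃ B hB)
  refine ext1Zero_iff_subsingleton_ext.2 (subsingleton_of_forall_eq 0 fun x => ?_)
  obtain ⟨y, rfl⟩ := Ext.contravariant_sequence_exact₂ hT B x (Subsingleton.elim _ _)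
  rw [Subsingleton.elim y 0, Ext.comp_zero]

lemma mem_rightPerp_of_shortExact {T : ShortComplex 𝒜} (hT : T.ShortExact)
    (h₁ : T.X₁ ∈ rightPerp S) (h₃ : T.X₃ ∈ rightPerp S) : T.X₂ ∈ rightPerp S := by
  let := HasExt.standard 𝒜
  intro A hA
  have := ext1Zero_iff_subsingleton_ext.1 (h₁ A hA)
  have := ext1Zero_iff_subsingleton_ext.1 (h₃ A hA)
  refine ext1Zero_iff_subsingleton_ext.2 (subsingleton_of_forall_eq 0 fun x => ?_)
  obtain ⟨y, rfl⟩ := Ext.covariant_sequence_exact₂ A hT x (Subsingleton.elim _ _)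
  rw [Subsingleton.elim y 0, Ext.zero_comp]

end OrthogonalClasses

section AcyclicComplexes

variable {K : CochainComplex 𝒜 ℤ}

lemma exactAt_iff_epi_toCycles {i j : ℤ} (hij : i + 1 = j) :
    K.ExactAt j ↔ Epi (K.toCycles i j) := by
  rw [K.exactAt_iff_isZero_homology]
  exact (Preadditive.epi_iff_isZero_cokernel' _
    (K.homologyIsCokernel i j (by simp [← hij]))).symm

lemma iCycles_comp_toCycles (K : CochainComplex 𝒜 ℤ) (i j : ℤ) :
    K.iCycles i ≫ K.toCycles i j = 0 := by
  rw [← cancel_mono (K.iCycles j)]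
  simp

lemma toCycles_comp_cyclesMap {L : CochainComplex 𝒜 ℤ} (φ : K ⟶ L) (i j : ℤ) :
    K.toCycles i j ≫ HomologicalComplex.cyclesMap φ j = φ.f i ≫ L.toCycles i j := by
  rw [← cancel_mono (L.iCycles j)]
  simp

lemma shortExact_iCycles_toCycles {i j : ℤ} (hij : i + 1 = j) (hK : K.ExactAt j) :
    (ShortComplex.mk (K.iCycles i) (K.toCycles i j) (iCycles_comp_toCycles K i j)).ShortExact := by
  have hker : IsLimit (KernelFork.ofι (K.iCycles i) (iCycles_comp_toCycles K i j)) :=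
    isKernelOfComp (K.iCycles j) _ (K.cyclesIsKernel i j (by simp [← hij])) _
      (K.toCycles_i i j)
  exact .mk' (ShortComplex.exact_of_f_is_kernel _ hker) inferInstance
    ((exactAt_iff_epi_toCycles hij).1 hK)

lemma shortExact_map_cyclesFunctor {S : ShortComplex (CochainComplex 𝒜 ℤ)} (hS : S.ShortExact)
    {n : ℤ} (h₃ : S.X₃.ExactAt n) :
    (S.map (HomologicalComplex.cyclesFunctor 𝒜 _ n)).ShortExact := by
  have := hS.mono_f
  have := hS.epi_g
  have := (exactAt_iff_epi_toCycles (sub_add_cancel n 1)).1 h₃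
  refine .mk' (HomologicalComplex.cycles_left_exact S hS.exact n)
    (inferInstanceAs (Mono (HomologicalComplex.cyclesMap S.f n))) ?_
  have := epi_comp (S.g.f (n - 1)) (S.X₃.toCycles (n - 1) n)
  exact show Epi (HomologicalComplex.cyclesMap S.g n) from
    epi_of_epi_fac (toCycles_comp_cyclesMap S.g (n - 1) n)

lemma quasiIso_of_acyclic {L : CochainComplex 𝒜 ℤ} (φ : K ⟶ L) (hK : K.Acyclic)
    (hL : L.Acyclic) : QuasiIso φ :=
  ⟨fun n => (quasiIsoAt_iff_exactAt φ n (hK n)).2 (hL n)⟩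

lemma mem_tilde_leftPerp_of_iso_cycles {S : Set 𝒜} {A : ℤ → 𝒜} (hK : K.Acyclic)
    (hA : ∀ n, A n ∈ leftPerp S) (e : ∀ n, Nonempty (A n ≅ K.cycles n)) : K ∈ Tilde (leftPerp S) :=
  have hZ n : K.cycles n ∈ leftPerp S := mem_leftPerp_of_iso (e n).some (hA n)
  ⟨hK, fun n => mem_leftPerp_of_shortExact (shortExact_iCycles_toCycles rfl (hK _)) (hZ n) (hZ _),
    hZ⟩

lemma mem_tilde_rightPerp_of_iso_cycles {S : Set 𝒜} {B : ℤ → 𝒜} (hK : K.Acyclic)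
    (hB : ∀ n, B n ∈ rightPerp S) (e : ∀ n, Nonempty (B n ≅ K.cycles n)) :
    K ∈ Tilde (rightPerp S) :=
  have hZ n : K.cycles n ∈ rightPerp S := mem_rightPerp_of_iso (e n).some (hB n)
  ⟨hK, fun n => mem_rightPerp_of_shortExact (shortExact_iCycles_toCycles rfl (hK _)) (hZ n) (hZ _),
    hZ⟩

lemma IsCotorsionPair.mem_tilde_left {𝓐 𝓑 : Set 𝒜} (h : IsCotorsionPair 𝓐 𝓑) {A : ℤ → 𝒜}
    (hK : K.Acyclic) (hA : ∀ n, A n ∈ 𝓐)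
    (e : ∀ n, Nonempty (A n ≅ K.cycles n)) : K ∈ Tilde 𝓐 := by
  obtain rfl := h.left_eq
  exact mem_tilde_leftPerp_of_iso_cycles hK hA e

lemma IsCotorsionPair.mem_tilde_right {𝓐 𝓑 : Set 𝒜} (h : IsCotorsionPair 𝓐 𝓑) {B : ℤ → 𝒜}
    (hK : K.Acyclic) (hB : ∀ n, B n ∈ 𝓑)
    (e : ∀ n, Nonempty (B n ≅ K.cycles n)) : K ∈ Tilde 𝓑 := by
  obtain rfl := h.right_eq
  exact mem_tilde_rightPerp_of_iso_cycles hK hB e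

end AcyclicComplexes

/-- A presentation of the cochain complex `K` as obtained by splicing short exact sequences
`0 ⟶ Z n ⟶ K.X n ⟶ Z (n + 1) ⟶ 0`. The complex is then acyclic with cycles `Z n`. -/
structure Splicing (K : CochainComplex 𝒜 ℤ) where
  Z : ℤ → 𝒜
  ι (n : ℤ) : Z n ⟶ K.X n
  π (n : ℤ) : K.X n ⟶ Z (n + 1)
  ι_π (n : ℤ) : ι n ≫ π n = 0
  shortExact (n : ℤ) : (ShortComplex.mk (ι n) (π n) (ι_π n)).ShortExact
  π_ι (n : ℤ) : π n ≫ ι (n + 1) = K.d n (n + 1)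

namespace Splicing

variable {K L : CochainComplex 𝒜 ℤ}

/-- The splicing of an acyclic complex given by its cycles. -/
noncomputable def ofAcyclic (hK : K.Acyclic) : Splicing K where
  Z n := K.cycles n
  ι n := K.iCycles n
  π n := K.toCycles n (n + 1)
  ι_π n := iCycles_comp_toCycles K n (n + 1)
  shortExact n := shortExact_iCycles_toCycles rfl (hK (n + 1))
  π_ι n := K.toCycles_i n (n + 1)

section OfShortExact

variable {Z X : ℤ → 𝒜} (f : ∀ n, Z n ⟶ X n) (g : ∀ n, X n ⟶ Z (n + 1))
  (w : ∀ n, f n ≫ g n = 0)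

/-- The complex with differentials `X n ⟶ Z (n + 1) ⟶ X (n + 1)` obtained from composable
sequences `Z n ⟶ X n ⟶ Z (n + 1)`. -/
noncomputable def complex : CochainComplex 𝒜 ℤ :=
  CochainComplex.of X (fun n => g n ≫ f (n + 1)) fun n => by simp [reassoc_of% (w (n + 1))]

/-- The tautological splicing of the complex built from short exact sequences. -/
noncomputable def ofShortExact (h : ∀ n, (ShortComplex.mk (f n) (g n) (w n)).ShortExact) :
    Splicing (complex f g w) where
  Z := Z
  ι := f
  π := g
  ι_π := w
  shortExact := h
  π_ι n := (CochainComplex.of_d X (fun n => g n ≫ f (n + 1)) n).symm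

end OfShortExact

section Cycles

variable (F : Splicing K) (n : ℤ)

/-- The objects `Z n` of a splicing are the cycles of the complex. -/
noncomputable def isoCycles : F.Z n ≅ K.cycles n :=
  have := (F.shortExact (n + 1)).mono_f
  IsLimit.conePointUniqueUpToIso
    (isKernelCompMono (F.shortExact n).fIsKernel (F.ι (n + 1)) (F.π_ι n).symm)
    (K.cyclesIsKernel n (n + 1) (by simp))

@[simp]
lemma isoCycles_hom_iCycles : (F.isoCycles n).hom ≫ K.iCycles n = F.ι n :=
  have := (F.shortExact (n + 1)).mono_f
  IsLimit.conePointUniqueUpToIso_hom_comp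
    (isKernelCompMono (F.shortExact n).fIsKernel (F.ι (n + 1)) (F.π_ι n).symm)
    (K.cyclesIsKernel n (n + 1) (by simp)) WalkingParallelPair.zero

lemma π_isoCycles_hom : F.π n ≫ (F.isoCycles (n + 1)).hom = K.toCycles n (n + 1) := by
  rw [← cancel_mono (K.iCycles (n + 1))]
  simp [F.π_ι n]

lemma acyclic (F : Splicing K) : K.Acyclic := by
  intro n
  obtain ⟨m, rfl⟩ : ∃ m, m + 1 = n := ⟨n - 1, sub_add_cancel n 1⟩
  have := (F.shortExact m).epi_g
  rw [exactAt_iff_epi_toCycles rfl, ← F.π_isoCycles_hom m]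
  exact epi_comp (F.π m) _

end Cycles

section Hom

variable (F : Splicing K) (G : Splicing L) (z : ∀ n, F.Z n ⟶ G.Z n) (φ : ∀ n, K.X n ⟶ L.X n)
  (hι : ∀ n, F.ι n ≫ φ n = z n ≫ G.ι n) (hπ : ∀ n, φ n ≫ G.π n = F.π n ≫ z (n + 1))

/-- The morphism of complexes assembled from morphisms between the spliced short exact
sequences. -/
noncomputable def hom : K ⟶ L :=
  CochainComplex.ofHom φ fun n => by
    rw [← G.π_ι, reassoc_of% (hπ n), ← hι, ← F.π_ι, Category.assoc]

lemma hom_f (n : ℤ) : (hom F G z φ hι hπ).f n = φ n := rfl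

lemma hom_isoCycles (n : ℤ) :
    z n ≫ (G.isoCycles n).hom =
      (F.isoCycles n).hom ≫ HomologicalComplex.cyclesMap (hom F G z φ hι hπ) n := by
  rw [← cancel_mono (L.iCycles n), Category.assoc, isoCycles_hom_iCycles, ← hι, Category.assoc,
    HomologicalComplex.cyclesMap_i, hom_f, ← Category.assoc, isoCycles_hom_iCycles]

lemma mono_hom (hz : ∀ n, Mono (z n)) : Mono (hom F G z φ hι hπ) := by
  have (n : ℤ) : Mono ((hom F G z φ hι hπ).f n) := by
    have := hz n
    have := hz (n + 1)
    have := (F.shortExact n).mono_f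
    have := (G.shortExact n).mono_f
    exact ShortComplex.mono_τ₂_of_exact_of_mono
      (ShortComplex.Hom.mk (S₁ := .mk _ _ (F.ι_π n)) (S₂ := .mk _ _ (G.ι_π n)) (z n) (φ n)
        (z (n + 1)) (hι n).symm (hπ n)) (F.shortExact n).exact
  exact HomologicalComplex.mono_of_mono_f _ this

lemma epi_hom (hz : ∀ n, Epi (z n)) : Epi (hom F G z φ hι hπ) := by
  have (n : ℤ) : Epi ((hom F G z φ hι hπ).f n) := by
    have := hz n
    have := hz (n + 1)
    have := (F.shortExact n).epi_g
    have := (G.shortExact n).epi_g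
    exact ShortComplex.epi_τ₂_of_exact_of_epi
      (ShortComplex.Hom.mk (S₁ := .mk _ _ (F.ι_π n)) (S₂ := .mk _ _ (G.ι_π n)) (z n) (φ n)
        (z (n + 1)) (hι n).symm (hπ n)) (G.shortExact n).exact
  exact HomologicalComplex.epi_of_epi_f _ this

end Hom

end Splicing

section SectionsOfComplexes

open Abelian

lemma exists_g_comp_comp_f_eq {S : ShortComplex 𝒜} (hS : S.ShortExact) (e : S.X₂ ⟶ S.X₂)
    (hf : S.f ≫ e = 0) (hg : e ≫ S.g = 0) : ∃ h : S.X₃ ⟶ S.X₁, S.g ≫ h ≫ S.f = e := by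
  have := hS.mono_f
  have := hS.epi_g
  obtain ⟨l, rfl⟩ : ∃ l, l ≫ S.f = e := ⟨hS.exact.lift e hg, hS.exact.lift_f e hg⟩
  have hl : S.f ≫ l = 0 := by rwa [← cancel_mono S.f, Category.assoc, zero_comp]
  exact ⟨hS.exact.desc l hl, by rw [← Category.assoc, hS.exact.g_desc]⟩

lemma exists_section_middle {T S : ShortComplex 𝒜} (hT : T.ShortExact) (hS : S.ShortExact)
    (p : T ⟶ S) {s₁ : S.X₁ ⟶ T.X₁} {s₃ : S.X₃ ⟶ T.X₃} (hs₁ : s₁ ≫ p.τ₁ = 𝟙 _)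
    (hs₃ : s₃ ≫ p.τ₃ = 𝟙 _) {Y : 𝒜} {k : Y ⟶ T.X₁} {w : k ≫ p.τ₁ = 0}
    (hk : (ShortComplex.mk k p.τ₁ w).ShortExact) (hY : Ext1Zero S.X₃ Y) :
    ∃ σ : S.X₂ ⟶ T.X₂, σ ≫ p.τ₂ = 𝟙 _ ∧ S.f ≫ σ = s₁ ≫ T.f ∧ σ ≫ T.g = S.g ≫ s₃ := by
  let := HasExt.standard 𝒜
  have hclass : hS.extClass.comp (Ext.mk₀ s₁) (add_zero 1) =
      (Ext.mk₀ s₃).comp hT.extClass (zero_add 1) := by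
    have := ext1Zero_iff_subsingleton_ext.1 hY
    -- The difference of both sides dies in `Ext S.X₃ S.X₁ 1`, hence comes from `Ext S.X₃ Y 1 = 0`.
    rw [← sub_eq_zero]
    obtain ⟨y, hy⟩ := Ext.covariant_sequence_exact₂ S.X₃ hk
      (hS.extClass.comp (Ext.mk₀ s₁) (add_zero 1) -
        (Ext.mk₀ s₃).comp hT.extClass (zero_add 1)) (by
        simp [sub_eq_add_neg, Ext.comp_assoc_of_third_deg_zero,
          ShortComplex.ShortExact.extClass_naturality hT hS p, hs₁, hs₃])
    rw [← hy, Subsingleton.elim y 0, Ext.zero_comp]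
  obtain ⟨β, hfβ, hβg⟩ := exists_middle_hom_of_extClass_comp_eq hS hT s₁ s₃ hclass
  obtain ⟨h, hh⟩ := exists_g_comp_comp_f_eq hS (β ≫ p.τ₂ - 𝟙 _)
    (by rw [Preadditive.comp_sub, reassoc_of% hfβ, ← p.comm₁₂, reassoc_of% hs₁]; simp)
    (by simp [p.comm₂₃, reassoc_of% hβg, hs₃])
  refine ⟨β - S.g ≫ h ≫ s₁ ≫ T.f, ?_, by simp [hfβ], by simp [hβg]⟩
  calc (β - S.g ≫ h ≫ s₁ ≫ T.f) ≫ p.τ₂ = β ≫ p.τ₂ - S.g ≫ h ≫ S.f := by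
        simp [← p.comm₁₂, reassoc_of% hs₁]
    _ = 𝟙 _ := by rw [hh, sub_sub_cancel]

lemma Ext1Zero.of_cycles {X Y : CochainComplex 𝒜 ℤ} (hX : X.Acyclic) (hY : Y.Acyclic)
    (h : ∀ m n, Ext1Zero (X.cycles m) (Y.cycles n)) : Ext1Zero X Y := by
  intro E i p w hE
  have hEacyclic : E.Acyclic := hE.acyclic_X₂ hY hX
  have hcycles (n : ℤ) := shortExact_map_cyclesFunctor hE (hX n)
  choose s hs using fun n => h n n _ _ _ _ (hcycles n)
  choose σ hσ hισ hσπ using fun n => exists_section_middle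
    ((Splicing.ofAcyclic hEacyclic).shortExact n) ((Splicing.ofAcyclic hX).shortExact n)
    { τ₁ := HomologicalComplex.cyclesMap p n, τ₂ := p.f n,
      τ₃ := HomologicalComplex.cyclesMap p (n + 1)
      comm₁₂ := HomologicalComplex.cyclesMap_i p n
      comm₂₃ := (toCycles_comp_cyclesMap p n (n + 1)).symm }
    (hs n) (hs (n + 1)) (hcycles n) (h _ _)
  refine ⟨Splicing.hom (.ofAcyclic hX) (.ofAcyclic hEacyclic) s σ hισ hσπ, ?_⟩
  ext n
  exact hσ n

end SectionsOfComplexes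

section Horseshoes

open Abelian

variable [HasExt.{w} 𝒜]

lemma exists_horseshoe_of_mono {S : ShortComplex 𝒜} (hS : S.ShortExact) {B B' A' : 𝒜}
    (b : S.X₁ ⟶ B) {b' : S.X₃ ⟶ B'} {q : B' ⟶ A'} {w : b' ≫ q = 0}
    (hb' : (ShortComplex.mk b' q w).ShortExact) [Subsingleton (Ext A' B 2)] :
    ∃ (E : 𝒜) (f : B ⟶ E) (g : E ⟶ B') (wE : f ≫ g = 0) (β : S.X₂ ⟶ E),
      (ShortComplex.mk f g wE).ShortExact ∧ S.f ≫ β = b ≫ f ∧ β ≫ g = S.g ≫ b' := by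
  obtain ⟨y, hy⟩ := Ext.contravariant_sequence_exact₁ hb' B
    (hS.extClass.comp (Ext.mk₀ b) (add_zero 1)) rfl (Subsingleton.elim (α := Ext A' B 2) _ _)
  obtain ⟨E, f, g, wE, hE, rfl⟩ := exists_shortExact_extClass_eq y
  obtain ⟨β, hfβ, hβg⟩ := exists_middle_hom_of_extClass_comp_eq hS hE b b' hy.symm
  exact ⟨E, f, g, wE, β, hE, hfβ, hβg⟩

lemma exists_horseshoe_of_epi {S : ShortComplex 𝒜} (hS : S.ShortExact) {A A' B : 𝒜}
    {q : B ⟶ A} {a : A ⟶ S.X₁} {w : q ≫ a = 0} (ha : (ShortComplex.mk q a w).ShortExact)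
    (a' : A' ⟶ S.X₃) [Subsingleton (Ext A' B 2)] :
    ∃ (E : 𝒜) (f : A ⟶ E) (g : E ⟶ A') (wE : f ≫ g = 0) (β : E ⟶ S.X₂),
      (ShortComplex.mk f g wE).ShortExact ∧ f ≫ β = a ≫ S.f ∧ β ≫ S.g = g ≫ a' := by
  obtain ⟨y, hy⟩ := Ext.covariant_sequence_exact₃ A' ha
    ((Ext.mk₀ a').comp hS.extClass (zero_add 1)) rfl (Subsingleton.elim (α := Ext A' B 2) _ _)
  obtain ⟨E, f, g, wE, hE, rfl⟩ := exists_shortExact_extClass_eq y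
  obtain ⟨β, hfβ, hβg⟩ := exists_middle_hom_of_extClass_comp_eq hE hS a a' hy
  exact ⟨E, f, g, wE, β, hE, hfβ, hβg⟩

end Horseshoes

namespace Splicing

open Abelian

variable [HasExt.{w} 𝒜] {W : CochainComplex 𝒜 ℤ} (F : Splicing W) {A B : ℤ → 𝒜}

lemma exists_shortExact_extending_mono {b : ∀ n, F.Z n ⟶ B n} {q : ∀ n, B n ⟶ A n}
    {w : ∀ n, b n ≫ q n = 0} (hb : ∀ n, (ShortComplex.mk (b n) (q n) (w n)).ShortExact)
    [∀ n, Subsingleton (Ext (A (n + 1)) (B n) 2)] :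
    ∃ (K L : CochainComplex 𝒜 ℤ) (i : W ⟶ K) (p : K ⟶ L) (wS : i ≫ p = 0),
      (ShortComplex.mk i p wS).ShortExact ∧ K.Acyclic ∧ L.Acyclic ∧
        (∀ n, Nonempty (B n ≅ K.cycles n)) ∧ ∀ n, Nonempty (A n ≅ L.cycles n) := by
  choose E f g wE β hE hfβ hβg using fun n =>
    exists_horseshoe_of_mono (F.shortExact n) (b n) (hb (n + 1))
  let G := ofShortExact f g wE hE
  let i := hom F G b β hfβ hβg
  have : Mono i := mono_hom F G b β hfβ hβg fun n => (hb n).mono_f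
  have hS : (ShortComplex.mk i (cokernel.π i) (cokernel.condition i)).ShortExact :=
    .mk' (ShortComplex.exact_cokernel i) inferInstance inferInstance
  have hL : (cokernel i).Acyclic := hS.acyclic_X₃ (quasiIso_of_acyclic i F.acyclic G.acyclic)
  refine ⟨_, _, i, _, _, hS, G.acyclic, hL, fun n => ⟨G.isoCycles n⟩, fun n => ⟨?_⟩⟩
  exact CokernelCofork.mapIsoOfIsColimit (hb n).gIsCokernel
    (shortExact_map_cyclesFunctor hS (hL n)).gIsCokernel
    (Arrow.isoMk (F.isoCycles n) (G.isoCycles n) (hom_isoCycles F G b β hfβ hβg n).symm)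

lemma exists_shortExact_extending_epi {q : ∀ n, B n ⟶ A n} {a : ∀ n, A n ⟶ F.Z n}
    {w : ∀ n, q n ≫ a n = 0} (ha : ∀ n, (ShortComplex.mk (q n) (a n) (w n)).ShortExact)
    [∀ n, Subsingleton (Ext (A (n + 1)) (B n) 2)] :
    ∃ (K L : CochainComplex 𝒜 ℤ) (i : K ⟶ L) (p : L ⟶ W) (wS : i ≫ p = 0),
      (ShortComplex.mk i p wS).ShortExact ∧ K.Acyclic ∧ L.Acyclic ∧
        (∀ n, Nonempty (B n ≅ K.cycles n)) ∧ ∀ n, Nonempty (A n ≅ L.cycles n) := by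
  choose E f g wE β hE hfβ hβg using fun n =>
    exists_horseshoe_of_epi (F.shortExact n) (ha n) (a (n + 1))
  let G := ofShortExact f g wE hE
  let p := hom G F a β hfβ hβg
  have : Epi p := epi_hom G F a β hfβ hβg fun n => (ha n).epi_g
  have hS : (ShortComplex.mk (kernel.ι p) p (kernel.condition p)).ShortExact :=
    .mk' (ShortComplex.exact_kernel p) inferInstance inferInstance
  have hK : (kernel p).Acyclic := hS.acyclic_X₁ (quasiIso_of_acyclic p G.acyclic F.acyclic)
  refine ⟨_, _, _, p, _, hS, hK, G.acyclic, fun n => ⟨?_⟩, fun n => ⟨G.isoCycles n⟩⟩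
  exact KernelFork.mapIsoOfIsLimit (ha n).fIsKernel
    (shortExact_map_cyclesFunctor hS (F.acyclic n)).fIsKernel
    (Arrow.isoMk (G.isoCycles n) (F.isoCycles n) (hom_isoCycles G F a β hfβ hβg n).symm)

end Splicing

/-- Let `(𝓐, 𝓑)` be a complete hereditary cotorsion pair in an abelian category `𝒜`.
Then (a) `Ext¹(X, Y) = 0` in the category of cochain complexes for every `X ∈ Ã` and
`Y ∈ B̃`, i.e. every short exact sequence of complexes `0 → Y → E → X → 0` with
`X ∈ Ã`, `Y ∈ B̃` splits; and (b) every acyclic complex `W` admits short exact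
sequences of complexes `0 → W → B_W → A_W → 0` and `0 → B^W → A^W → W → 0` with
`A_W, A^W ∈ Ã` and `B_W, B^W ∈ B̃`. -/
theorem stmt_11 [HasExt.{w} 𝒜] (𝓐 𝓑 : Set 𝒜)
    (hpair : IsCompleteCotorsionPair 𝓐 𝓑) (hher : IsHereditary 𝓐 𝓑) :
    (∀ X ∈ Tilde 𝓐, ∀ Y ∈ Tilde 𝓑, Ext1Zero X Y) ∧
    (∀ W : CochainComplex 𝒜 ℤ, (∀ n : ℤ, W.ExactAt n) →
      (∃ (BW AW : CochainComplex 𝒜 ℤ) (i : W ⟶ BW) (p : BW ⟶ AW) (w : i ≫ p = 0),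
        (ShortComplex.mk i p w).ShortExact ∧ BW ∈ Tilde 𝓑 ∧ AW ∈ Tilde 𝓐) ∧
      (∃ (BW AW : CochainComplex 𝒜 ℤ) (i : BW ⟶ AW) (p : AW ⟶ W) (w : i ≫ p = 0),
        (ShortComplex.mk i p w).ShortExact ∧ BW ∈ Tilde 𝓑 ∧ AW ∈ Tilde 𝓐)) := by
  refine ⟨fun X hX Y hY => .of_cycles hX.1 hY.1 fun m n =>
    ext1Zero_iff_subsingleton_ext.2 (hher _ (hX.2.2 m) _ (hY.2.2 n) 1 le_rfl),
    fun W hW => ⟨?_, ?_⟩⟩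
  · choose B A b q w hb hB hA using fun n => hpair.approx₁ (W.cycles n)
    have (n : ℤ) := hher _ (hA (n + 1)) _ (hB n) 2 one_le_two
    obtain ⟨K, L, i, p, wS, hS, hK, hL, eB, eA⟩ :=
      (Splicing.ofAcyclic hW).exists_shortExact_extending_mono hb
    exact ⟨K, L, i, p, wS, hS, hpair.mem_tilde_right hK hB eB, hpair.mem_tilde_left hL hA eA⟩
  · choose B A q a w ha hB hA using fun n => hpair.approx₂ (W.cycles n)
    have (n : ℤ) := hher _ (hA (n + 1)) _ (hB n) 2 one_le_two
    obtain ⟨K, L, i, p, wS, hS, hK, hL, eB, eA⟩ :=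
      (Splicing.ofAcyclic hW).exists_shortExact_extending_epi ha
    exact ⟨K, L, i, p, wS, hS, hpair.mem_tilde_right hK hB eB, hpair.mem_tilde_left hL hA eA⟩
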